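/- Let K be a field of characteristic zero and w ∈ S_n. The vanishing ideal I(Y_w^∘) in K[x_γ : γ ∈ Δ⁺] is a homogeneous ideal (i.e., contains every homogeneous component of each of its elements; equivalently, the Zariski closure Y_w is a cone with center at the origin) if and only if w = w_D for some basic subset D ⊆ Δ⁺. -/

import Mathlib

/-- A positive root `(i,j)`: `n ≥ i > j ≥ 1`. -/
def IsPosRoot (n : ℕ) (γ : ℕ × ℕ) : Prop := 1 ≤ γ.2 ∧ γ.2 < γ.1 ∧ γ.1 ≤ n

/-- `γ` is the sum of the roots `α` and `β` (in either order):
`(i,j) + (j,k) = (i,k)`. -/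
def RootSum (α β γ : ℕ × ℕ) : Prop :=
  (α.2 = β.1 ∧ γ = (α.1, β.2)) ∨ (β.2 = α.1 ∧ γ = (β.1, α.2))

/-- A basic subset: a set of positive roots with at most one root in each
row and at most one root in each column. -/
def IsBasic (n : ℕ) (D : Set (ℕ × ℕ)) : Prop :=
  (∀ γ ∈ D, IsPosRoot n γ) ∧
  (∀ α ∈ D, ∀ β ∈ D, α.1 = β.1 → α = β) ∧
  (∀ α ∈ D, ∀ β ∈ D, α.2 = β.2 → α = β)

/-- A positive root `α` is `D`-singular if `α + β ∈ D` for some positive root `β`. -/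
def IsSingular (n : ℕ) (D : Set (ℕ × ℕ)) (α : ℕ × ℕ) : Prop :=
  IsPosRoot n α ∧ ∃ β γ, IsPosRoot n β ∧ RootSum α β γ ∧ γ ∈ D

/-- `M(D) = R(D) \ D`, where `R(D)` is the set of `D`-regular positive roots. -/
def MD (n : ℕ) (D : Set (ℕ × ℕ)) : Set (ℕ × ℕ) :=
  {γ | IsPosRoot n γ ∧ ¬ IsSingular n D γ ∧ γ ∉ D}
/-- The list `[w_D(1), …, w_D(j)]`, defined recursively: `w_D(j)` is the
greatest `i ∈ {1,…,n}` with `(i,j) ∉ M(D)` and `i ∉ {w_D(1),…,w_D(j-1)}`. -/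
noncomputable def wDVals (n : ℕ) (D : Set (ℕ × ℕ)) : ℕ → List ℕ
  | 0 => []
  | j + 1 =>
    let prev := wDVals n D j
    prev ++ [sSup {i | 1 ≤ i ∧ i ≤ n ∧ (i, j + 1) ∉ MD n D ∧ i ∉ prev}]

/-- The permutation `w_D` associated with a basic subset `D` (as a map `ℕ → ℕ`,
meaningful on `{1,…,n}`). -/
noncomputable def wD (n : ℕ) (D : Set (ℕ × ℕ)) (j : ℕ) : ℕ :=
  ((wDVals n D j).getLast?).getD 0
open scoped Classical

/-- The variable set `{x_γ : γ ∈ Δ⁺}`: positive roots of `Δ⁺`. -/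
abbrev PRoot (n : ℕ) : Type := {γ : ℕ × ℕ // IsPosRoot n γ}

/-- A point `v : Δ⁺ → K` of `𝔫₋` realized as a strictly lower triangular
matrix (`1`-based roots, `0`-based matrix indices). -/
noncomputable def matOf (n : ℕ) (K : Type) [Field K] (v : PRoot n → K) :
    Matrix (Fin n) (Fin n) K :=
  fun a b =>
    if h : IsPosRoot n ((a : ℕ) + 1, (b : ℕ) + 1) then v ⟨((a : ℕ) + 1, (b : ℕ) + 1), h⟩
    else 0

/-- The point of `𝔫₋` given by the strictly lower triangular entries of a
matrix. -/
noncomputable def vecOf (n : ℕ) (K : Type) [Field K] (A : Matrix (Fin n) (Fin n) K)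
    (γ : PRoot n) : K :=
  A ⟨γ.1.1 - 1, by obtain ⟨h1, h2, h3⟩ := γ.2; omega⟩
    ⟨γ.1.2 - 1, by obtain ⟨h1, h2, h3⟩ := γ.2; omega⟩

/-- `π`: the strictly lower triangular part of a matrix. -/
def lowerPart (n : ℕ) (K : Type) [Field K] (A : Matrix (Fin n) (Fin n) K) :
    Matrix (Fin n) (Fin n) K :=
  fun a b => if (b : ℕ) < (a : ℕ) then A a b else 0

/-- Membership in `N = UT(n,K)`: upper triangular with units on the diagonal. -/
def IsUni (n : ℕ) (K : Type) [Field K] (g : Matrix (Fin n) (Fin n) K) : Prop :=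
  (∀ i : Fin n, g i i = 1) ∧ ∀ i j : Fin n, j < i → g i j = 0

/-- The element `X_{D,φ} = Σ_{ξ ∈ D} φ(ξ) E_ξ` of `𝔫₋`. -/
noncomputable def XDphi (n : ℕ) (K : Type) [Field K] (D : Set (ℕ × ℕ)) (φ : ℕ × ℕ → K) :
    Matrix (Fin n) (Fin n) K :=
  fun a b => if ((a : ℕ) + 1, (b : ℕ) + 1) ∈ D then φ ((a : ℕ) + 1, (b : ℕ) + 1) else 0

/-- The basic variety `V_{D,φ} = {π(g X_{D,φ} h) : g, h ∈ N}`, as a set of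
points of `𝔫₋`. -/
noncomputable def VDvar (n : ℕ) (K : Type) [Field K] (D : Set (ℕ × ℕ)) (φ : ℕ × ℕ → K) :
    Set (PRoot n → K) :=
  {v | ∃ g h : Matrix (Fin n) (Fin n) K, IsUni n K g ∧ IsUni n K h ∧
    v = vecOf n K (lowerPart n K (g * XDphi n K D φ * h))}

/-- The basic cell `V_D^∘ = ⋃_φ V_{D,φ}`, over all `φ : D → K ∖ {0}`. -/
noncomputable def VDcell (n : ℕ) (K : Type) [Field K] (D : Set (ℕ × ℕ)) :
    Set (PRoot n → K) :=
  {v | ∃ φ : ℕ × ℕ → K, (∀ γ ∈ D, φ γ ≠ 0) ∧ v ∈ VDvar n K D φ}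

/-- The vanishing ideal `I(S)` of a set of points `S`. -/
noncomputable def vanishing (σ K : Type) [Field K] (S : Set (σ → K)) :
    Ideal (MvPolynomial σ K) where
  carrier := {f | ∀ v ∈ S, MvPolynomial.eval v f = 0}
  add_mem' := by
    intro a b ha hb v hv
    simp [map_add, ha v hv, hb v hv]
  zero_mem' := by intro v hv; simp
  smul_mem' := by
    intro c f hf v hv
    simp [smul_eq_mul, hf v hv]
/-- Membership in the Borel subgroup `B` of invertible upper triangular matrices. -/
def InBorel {n : ℕ} {R : Type} [CommRing R] (b : Matrix (Fin n) (Fin n) R) : Prop :=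
  IsUnit b.det ∧ ∀ i j : Fin n, j < i → b i j = 0

/-- The permutation matrix `ẇ` of `w ∈ S_n`. -/
def permMat (n : ℕ) (K : Type) [Field K] (w : Equiv.Perm (Fin n)) :
    Matrix (Fin n) (Fin n) K :=
  fun a b => if a = w b then 1 else 0

/-- `Y_w^∘ = {X ∈ 𝔫₋ : 1 + X ∈ B ẇ B}`, as a set of points of `𝔫₋`. -/
noncomputable def YwCell (n : ℕ) (K : Type) [Field K] (w : Equiv.Perm (Fin n)) :
    Set (PRoot n → K) :=
  {v | ∃ b₁ b₂ : Matrix (Fin n) (Fin n) K, InBorel b₁ ∧ InBorel b₂ ∧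
    1 + matOf n K v = b₁ * permMat n K w * b₂}

namespace BruhatCone

open Matrix

variable {n : ℕ} {K : Type} [Field K]

/-! ### Ranks of lower left corners -/

/-- The projection onto the rows with (zero-based) index at least `i`. -/
noncomputable def lowRows (n : ℕ) (K : Type) [Field K] (i : ℕ) : Matrix (Fin n) (Fin n) K :=
  diagonal fun a => if i ≤ (a : ℕ) then 1 else 0

/-- The projection onto the columns with (zero-based) index less than `j`. -/
noncomputable def firstCols (n : ℕ) (K : Type) [Field K] (j : ℕ) : Matrix (Fin n) (Fin n) K :=
  diagonal fun a => if (a : ℕ) < j then 1 else 0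

/-- The lower left corner of `g`: rows `≥ i`, columns `< j`, all other entries replaced by `0`. -/
noncomputable def corner (g : Matrix (Fin n) (Fin n) K) (i j : ℕ) : Matrix (Fin n) (Fin n) K :=
  lowRows n K i * g * firstCols n K j

theorem corner_apply (g : Matrix (Fin n) (Fin n) K) (i j : ℕ) (a b : Fin n) :
    corner g i j a b = if i ≤ (a : ℕ) ∧ (b : ℕ) < j then g a b else 0 := by
  simp only [corner, lowRows, firstCols, mul_diagonal, diagonal_mul]
  split_ifs <;> simp_all

theorem corner_mulVec_apply (g : Matrix (Fin n) (Fin n) K) (i j : ℕ) (z : Fin n → K) (a : Fin n) :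
    (corner g i j *ᵥ z) a = if i ≤ (a : ℕ) then (g *ᵥ (firstCols n K j *ᵥ z)) a else 0 := by
  rw [corner, ← mulVec_mulVec, ← mulVec_mulVec, lowRows, mulVec_diagonal]
  split_ifs <;> simp

theorem firstCols_mulVec_apply (j : ℕ) (z : Fin n → K) (a : Fin n) :
    (firstCols n K j *ᵥ z) a = if (a : ℕ) < j then z a else 0 := by
  rw [firstCols, mulVec_diagonal]
  split_ifs <;> simp

theorem firstCols_mulVec_of_support {j : ℕ} {z : Fin n → K}
    (hz : ∀ a : Fin n, j ≤ (a : ℕ) → z a = 0) : firstCols n K j *ᵥ z = z := by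
  ext a
  rw [firstCols_mulVec_apply]
  split_ifs with h
  · rfl
  · exact (hz a (not_lt.mp h)).symm

theorem rank_add_le (A B : Matrix (Fin n) (Fin n) K) : (A + B).rank ≤ A.rank + B.rank := by
  have h : LinearMap.range (A + B).mulVecLin ≤
      LinearMap.range A.mulVecLin ⊔ LinearMap.range B.mulVecLin := by
    rintro _ ⟨z, rfl⟩
    rw [mulVecLin_add, LinearMap.add_apply]
    exact Submodule.add_mem_sup ⟨z, rfl⟩ ⟨z, rfl⟩
  exact (Submodule.finrank_mono h).trans (Submodule.finrank_add_le_finrank_add_finrank _ _)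

theorem rank_diagonal_ite (p : Fin n → Prop) [DecidablePred p] :
    (diagonal fun k => if p k then (1 : K) else 0).rank = (Finset.univ.filter p).card := by
  rw [rank_diagonal, Fintype.card_subtype]
  congr 1
  ext k
  simp

theorem lowRows_mul_upper {b : Matrix (Fin n) (Fin n) K} (hb : b.IsUpperTriangular) (i : ℕ) :
    lowRows n K i * b * lowRows n K i = lowRows n K i * b := by
  ext x y
  simp only [lowRows, mul_diagonal, diagonal_mul]
  by_cases hx : i ≤ (x : ℕ) <;> by_cases hy : i ≤ (y : ℕ) <;> simp only [hx, hy, if_true, if_false,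
    mul_one, mul_zero, zero_mul, one_mul]
  exact (hb (show y < x by rw [Fin.lt_def]; omega)).symm

theorem upper_mul_firstCols {c : Matrix (Fin n) (Fin n) K} (hc : c.IsUpperTriangular) (j : ℕ) :
    firstCols n K j * (c * firstCols n K j) = c * firstCols n K j := by
  ext x y
  simp only [firstCols, mul_diagonal, diagonal_mul]
  by_cases hx : (x : ℕ) < j <;> by_cases hy : (y : ℕ) < j <;> simp only [hx, hy, if_true, if_false,
    mul_one, mul_zero, zero_mul, one_mul]
  exact (hc (show y < x by rw [Fin.lt_def]; omega)).symm

theorem corner_upper_mul {b c : Matrix (Fin n) (Fin n) K} (hb : b.IsUpperTriangular)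
    (hc : c.IsUpperTriangular) (g : Matrix (Fin n) (Fin n) K) (i j : ℕ) :
    corner (b * g * c) i j = lowRows n K i * b * corner g i j * (c * firstCols n K j) := by
  calc corner (b * g * c) i j = (lowRows n K i * b) * g * (c * firstCols n K j) := by
        simp only [corner, Matrix.mul_assoc]
    _ = (lowRows n K i * b * lowRows n K i) * g *
          (firstCols n K j * (c * firstCols n K j)) := by
        rw [lowRows_mul_upper hb, upper_mul_firstCols hc]
    _ = lowRows n K i * b * corner g i j * (c * firstCols n K j) := by
        simp only [corner, Matrix.mul_assoc]

theorem rank_corner_upper_mul_le {b c : Matrix (Fin n) (Fin n) K} (hb : b.IsUpperTriangular)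
    (hc : c.IsUpperTriangular) (g : Matrix (Fin n) (Fin n) K) (i j : ℕ) :
    (corner (b * g * c) i j).rank ≤ (corner g i j).rank := by
  rw [corner_upper_mul hb hc]
  exact (rank_mul_le_left _ _).trans (rank_mul_le_right _ _)

theorem _root_.InBorel.upper {b : Matrix (Fin n) (Fin n) K} (hb : InBorel b) : b.IsUpperTriangular :=
  fun i j h => hb.2 i j h

theorem _root_.InBorel.inv {b : Matrix (Fin n) (Fin n) K} (hb : InBorel b) : InBorel b⁻¹ := by
  have := invertibleOfIsUnitDet b hb.1
  exact ⟨(isUnit_nonsing_inv_det_iff).mpr hb.1,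
    fun i j h => blockTriangular_inv_of_blockTriangular hb.upper h⟩

theorem _root_.InBorel.mul {b c : Matrix (Fin n) (Fin n) K} (hb : InBorel b) (hc : InBorel c) :
    InBorel (b * c) := by
  refine ⟨?_, fun i j h => hb.upper.mul hc.upper h⟩
  rw [det_mul]
  exact hb.1.mul hc.1

theorem _root_.InBorel.diag_ne_zero {b : Matrix (Fin n) (Fin n) K} (hb : InBorel b) (i : Fin n) :
    b i i ≠ 0 := by
  have h := hb.1
  rw [det_of_isUpperTriangular hb.upper] at h
  exact Finset.prod_ne_zero_iff.mp h.ne_zero i (Finset.mem_univ i)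

theorem rank_corner_borel {b c : Matrix (Fin n) (Fin n) K} (hb : InBorel b) (hc : InBorel c)
    (g : Matrix (Fin n) (Fin n) K) (i j : ℕ) :
    (corner (b * g * c) i j).rank = (corner g i j).rank := by
  refine le_antisymm (rank_corner_upper_mul_le hb.upper hc.upper g i j) ?_
  have h := rank_corner_upper_mul_le hb.inv.upper hc.inv.upper (b * g * c) i j
  rwa [show b⁻¹ * (b * g * c) * c⁻¹ = g by
    rw [Matrix.mul_assoc b, nonsing_inv_mul_cancel_left _ _ hb.1,
      mul_nonsing_inv_cancel_right _ _ hc.1]] at h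

theorem rank_corner_le_succ_row (g : Matrix (Fin n) (Fin n) K) (i j : ℕ) :
    (corner g i j).rank ≤ (corner g (i + 1) j).rank + 1 := by
  have h : corner g i j = corner g (i + 1) j +
      (diagonal fun a : Fin n => if (a : ℕ) = i then (1 : K) else 0) * (g * firstCols n K j) := by
    ext a b
    rw [Matrix.add_apply, corner_apply, corner_apply, diagonal_mul, firstCols, mul_diagonal]
    split_ifs <;> first | omega | simp
  rw [h]
  refine (rank_add_le _ _).trans (Nat.add_le_add_left ((rank_mul_le_left _ _).trans ?_) _)
  rw [rank_diagonal_ite, Finset.card_le_one]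
  intro a ha b hb
  simp only [Finset.mem_filter, Finset.mem_univ, true_and] at ha hb
  exact Fin.ext (ha.trans hb.symm)

theorem rank_corner_succ_col_le (g : Matrix (Fin n) (Fin n) K) (i j : ℕ) :
    (corner g i (j + 1)).rank ≤ (corner g i j).rank + 1 := by
  have h : corner g i (j + 1) = corner g i j +
      (lowRows n K i * g) * (diagonal fun a : Fin n => if (a : ℕ) = j then (1 : K) else 0) := by
    ext a b
    rw [Matrix.add_apply, corner_apply, corner_apply, mul_diagonal, lowRows, diagonal_mul]
    split_ifs <;> first | omega | simp
  rw [h]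
  refine (rank_add_le _ _).trans (Nat.add_le_add_left ((rank_mul_le_right _ _).trans ?_) _)
  rw [rank_diagonal_ite, Finset.card_le_one]
  intro a ha b hb
  simp only [Finset.mem_filter, Finset.mem_univ, true_and] at ha hb
  exact Fin.ext (ha.trans hb.symm)

theorem rank_corner_le_diagonal_corner (g : Matrix (Fin n) (Fin n) K) {i m j : ℕ} (him : i ≤ m)
    (hmj : m ≤ j) : (corner g i j).rank ≤ (m - i) + (j - m) + (corner g m m).rank := by
  have hrow : ∀ d, (corner g i j).rank ≤ d + (corner g (i + d) j).rank := by
    intro d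
    induction d with
    | zero => simp
    | succ d ih =>
      have := rank_corner_le_succ_row g (i + d) j
      rw [add_assoc] at this
      omega
  have hcol : ∀ d, (corner g m (m + d)).rank ≤ d + (corner g m m).rank := by
    intro d
    induction d with
    | zero => simp
    | succ d ih =>
      have := rank_corner_succ_col_le g m (m + d)
      rw [add_assoc] at this
      omega
  have h1 := hrow (m - i)
  have h2 := hcol (j - m)
  rw [Nat.add_sub_cancel' him] at h1
  rw [Nat.add_sub_cancel' hmj] at h2
  omega

/-! ### Permutation matrices -/

theorem permMat_mul_apply (w : Equiv.Perm (Fin n)) (A : Matrix (Fin n) (Fin n) K) (a b : Fin n) :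
    (permMat n K w * A) a b = A (w.symm a) b := by
  rw [mul_apply, Finset.sum_eq_single (w.symm a)]
  · simp [permMat]
  · intro k _ hk
    have : a ≠ w k := fun h => hk (by rw [h, Equiv.symm_apply_apply])
    simp [permMat, this]
  · simp

theorem mul_permMat_apply (w : Equiv.Perm (Fin n)) (A : Matrix (Fin n) (Fin n) K) (a b : Fin n) :
    (A * permMat n K w) a b = A a (w b) := by
  rw [mul_apply, Finset.sum_eq_single (w b)]
  · simp [permMat]
  · intro k _ hk
    simp [permMat, hk]
  · simp

theorem permMat_symm_mul (w : Equiv.Perm (Fin n)) :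
    permMat n K w.symm * permMat n K w = 1 := by
  ext a b
  rw [permMat_mul_apply, permMat, one_apply]
  simp

theorem isUnit_det_permMat (w : Equiv.Perm (Fin n)) : IsUnit (permMat n K w).det := by
  refine IsUnit.of_mul_eq_one_right (permMat n K w.symm).det ?_
  rw [← det_mul, permMat_symm_mul, det_one]

theorem rank_corner_permMat (w : Equiv.Perm (Fin n)) (i j : ℕ) :
    (corner (permMat n K w) i j).rank =
      (Finset.univ.filter fun k : Fin n => i ≤ (w k : ℕ) ∧ (k : ℕ) < j).card := by
  have h : corner (permMat n K w) i j = permMat n K w *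
      diagonal fun k : Fin n => if i ≤ (w k : ℕ) ∧ (k : ℕ) < j then (1 : K) else 0 := by
    ext a b
    rw [corner_apply, mul_diagonal, permMat]
    by_cases hab : a = w b <;> simp [hab]
  rw [h, rank_mul_eq_right_of_isUnit_det _ _ (isUnit_det_permMat w), rank_diagonal_ite]

/-- A matrix whose corner ranks are those of a permutation lies in its Bruhat cell. -/
theorem exists_borel_of_rank_corner_eq (g : Matrix (Fin n) (Fin n) K) (w : Equiv.Perm (Fin n))
    (h : ∀ i j, i ≤ n → j ≤ n →
      (corner g i j).rank = (corner (permMat n K w) i j).rank) :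
    ∃ b c : Matrix (Fin n) (Fin n) K, InBorel b ∧ InBorel c ∧ g = b * permMat n K w * c := by
  have key : ∀ k : Fin n, ∃ z : Fin n → K, (∀ a : Fin n, k < a → z a = 0) ∧ z k ≠ 0 ∧
      (∀ a : Fin n, w k < a → (g *ᵥ z) a = 0) ∧ (g *ᵥ z) (w k) ≠ 0 := by
    intro k
    obtain ⟨z₁, hz₁, hz₁k, hgz₁⟩ : ∃ z : Fin n → K, (∀ a : Fin n, k < a → z a = 0) ∧ z k ≠ 0 ∧
        (∀ a : Fin n, w k < a → (g *ᵥ z) a = 0) := by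
      have hr : (corner g (w k + 1) k).rank = (corner g (w k + 1) (k + 1)).rank := by
        rw [h _ _ (by omega) (by omega), h _ _ (by omega) (by omega), rank_corner_permMat,
          rank_corner_permMat]
        congr 1
        ext l
        simp only [Finset.mem_filter, Finset.mem_univ, true_and]
        constructor
        · rintro ⟨h1, h2⟩; exact ⟨h1, by omega⟩
        · rintro ⟨h1, h2⟩
          refine ⟨h1, lt_of_le_of_ne (by omega) fun hlk => ?_⟩
          rw [Fin.ext hlk] at h1
          omega
      have hle : LinearMap.range (corner g (w k + 1) k).mulVecLin ≤
          LinearMap.range (corner g (w k + 1) (k + 1)).mulVecLin := by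
        rintro _ ⟨z, rfl⟩
        refine ⟨firstCols n K k *ᵥ z, ?_⟩
        ext a
        rw [mulVecLin_apply, mulVecLin_apply, corner_mulVec_apply, corner_mulVec_apply,
          firstCols_mulVec_of_support (j := (k : ℕ) + 1)]
        intro b hb
        rw [firstCols_mulVec_apply, if_neg (by omega)]
      have heq := Submodule.eq_of_le_of_finrank_eq hle hr
      have hmem : (corner g (w k + 1) (k + 1)).mulVecLin (Pi.single k 1) ∈
          LinearMap.range (corner g (w k + 1) k).mulVecLin := by
        rw [heq]; exact ⟨_, rfl⟩
      obtain ⟨y, hy⟩ := hmem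
      have hsingle : firstCols n K (k + 1) *ᵥ (Pi.single k 1 : Fin n → K) = Pi.single k 1 := by
        refine firstCols_mulVec_of_support fun a ha => ?_
        rw [Pi.single_apply, if_neg]
        rintro rfl
        omega
      refine ⟨Pi.single k 1 - firstCols n K k *ᵥ y, fun a ha => ?_, ?_, fun a ha => ?_⟩
      · rw [Fin.lt_def] at ha
        rw [Pi.sub_apply, firstCols_mulVec_apply, if_neg (by omega), Pi.single_apply, if_neg,
          sub_zero]
        rintro rfl
        omega
      · simp [firstCols_mulVec_apply]
      · rw [Fin.lt_def] at ha
        have := congrFun hy a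
        rw [mulVecLin_apply, mulVecLin_apply, corner_mulVec_apply, corner_mulVec_apply,
          if_pos (by omega), if_pos (by omega), hsingle] at this
        rw [mulVec_sub, Pi.sub_apply, this, sub_self]
    obtain ⟨z₂, hz₂, hgz₂, hz₂k⟩ : ∃ z : Fin n → K, (∀ a : Fin n, k < a → z a = 0) ∧
        (∀ a : Fin n, w k < a → (g *ᵥ z) a = 0) ∧ (g *ᵥ z) (w k) ≠ 0 := by
      by_contra! hcon
      have hker : LinearMap.ker (corner g (w k + 1) (k + 1)).mulVecLin ≤
          LinearMap.ker (corner g (w k) (k + 1)).mulVecLin := by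
        intro z hz
        rw [LinearMap.mem_ker, mulVecLin_apply] at hz ⊢
        have hz' : ∀ a : Fin n, w k < a → (g *ᵥ (firstCols n K (k + 1) *ᵥ z)) a = 0 := by
          intro a ha
          rw [Fin.lt_def] at ha
          have := congrFun hz a
          rwa [corner_mulVec_apply, if_pos (by omega)] at this
        have h0 := hcon (firstCols n K (k + 1) *ᵥ z) (fun a ha => by
          rw [Fin.lt_def] at ha
          rw [firstCols_mulVec_apply, if_neg (by omega)]) hz'
        ext a
        rw [corner_mulVec_apply, Pi.zero_apply]
        split_ifs with ha
        · rcases ha.eq_or_lt with ha | ha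
          · rw [← Fin.ext ha, h0]
          · exact hz' a ha
        · rfl
      have h1 := LinearMap.finrank_range_add_finrank_ker (corner g (w k + 1) (k + 1)).mulVecLin
      have h2 := LinearMap.finrank_range_add_finrank_ker (corner g (w k) (k + 1)).mulVecLin
      have h3 := Submodule.finrank_mono hker
      have h4 : (corner g (w k) (k + 1)).rank ≤ (corner g (w k + 1) (k + 1)).rank := by
        rw [Matrix.rank, Matrix.rank]; omega
      rw [h _ _ (by omega) (by omega), h _ _ (by omega) (by omega), rank_corner_permMat,
          rank_corner_permMat] at h4
      refine absurd h4 (not_le.mpr (Finset.card_lt_card ?_))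
      rw [Finset.ssubset_iff_of_subset]
      · exact ⟨k, by simp, by simp⟩
      · intro l hl
        simp only [Finset.mem_filter, Finset.mem_univ, true_and] at hl ⊢
        omega
    by_cases c1 : (g *ᵥ z₁) (w k) = 0
    · by_cases c2 : z₂ k = 0
      · refine ⟨z₁ + z₂, fun a ha => ?_, ?_, fun a ha => ?_, ?_⟩
        · rw [Pi.add_apply, hz₁ a ha, hz₂ a ha, add_zero]
        · rwa [Pi.add_apply, c2, add_zero]
        · rw [mulVec_add, Pi.add_apply, hgz₁ a ha, hgz₂ a ha, add_zero]
        · rwa [mulVec_add, Pi.add_apply, c1, zero_add]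
      · exact ⟨z₂, hz₂, c2, hgz₂, hz₂k⟩
    · exact ⟨z₁, hz₁, hz₁k, hgz₁, c1⟩
  choose z hz hzk hgz hgzk using key
  let c : Matrix (Fin n) (Fin n) K := of fun a k => z k a
  have hgc : ∀ a k, (g * c) a k = (g *ᵥ z k) a := fun a k => rfl
  have hc : InBorel c := by
    have hup : c.IsUpperTriangular := fun a k hak => hz k a hak
    refine ⟨?_, fun a k hak => hup hak⟩
    rw [det_of_isUpperTriangular hup]
    exact (Finset.prod_ne_zero_iff.mpr fun k _ => hzk k).isUnit
  have hb : InBorel (g * c * permMat n K w.symm) := by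
    have hup : (g * c * permMat n K w.symm).IsUpperTriangular := by
      intro a k hak
      rw [mul_permMat_apply, hgc]
      exact hgz _ a (by simpa using hak)
    refine ⟨?_, fun a k hak => hup hak⟩
    rw [det_of_isUpperTriangular hup]
    refine (Finset.prod_ne_zero_iff.mpr fun k _ => ?_).isUnit
    rw [mul_permMat_apply, hgc]
    simpa using hgzk (w.symm k)
  refine ⟨_, c⁻¹, hb, hc.inv, ?_⟩
  rw [Matrix.mul_assoc (g * c), permMat_symm_mul, Matrix.mul_one,
    mul_nonsing_inv_cancel_right _ _ hc.1]

/-! ### Combinatorial description of the permutations `w_D` -/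

/-- There are no `j < k` with `w j < w k ≤ j`. -/
def Avoids (w : Equiv.Perm (Fin n)) : Prop :=
  ∀ j k : Fin n, j < k → w j < w k → j < w k

theorem wD_succ (D : Set (ℕ × ℕ)) (j : ℕ) : wD n D (j + 1) =
    sSup {i | 1 ≤ i ∧ i ≤ n ∧ (i, j + 1) ∉ MD n D ∧ i ∉ wDVals n D j} := by
  simp [wD, wDVals]

theorem mem_wDVals (D : Set (ℕ × ℕ)) (j i : ℕ) :
    i ∈ wDVals n D j ↔ ∃ l < j, i = wD n D (l + 1) := by
  induction j with
  | zero => simp [wDVals]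
  | succ j ih =>
    rw [wDVals, List.mem_append, ih, List.mem_singleton, ← wD_succ]
    constructor
    · rintro (⟨l, hl, rfl⟩ | rfl)
      · exact ⟨l, by omega, rfl⟩
      · exact ⟨j, by omega, rfl⟩
    · rintro ⟨l, hl, rfl⟩
      rcases Nat.lt_succ_iff_lt_or_eq.mp hl with hl | rfl
      · exact Or.inl ⟨l, hl, rfl⟩
      · exact Or.inr rfl

theorem avoids_of_eq_wD (w : Equiv.Perm (Fin n)) (D : Set (ℕ × ℕ))
    (h : ∀ j : Fin n, ((w j : ℕ) + 1) = wD n D ((j : ℕ) + 1)) : Avoids w := by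
  intro j k hjk hw
  by_contra hle
  rw [Fin.lt_def] at hle hjk hw
  have hmem : (w k : ℕ) + 1 ∈
      {i | 1 ≤ i ∧ i ≤ n ∧ (i, (j : ℕ) + 1) ∉ MD n D ∧ i ∉ wDVals n D j} := by
    refine ⟨by omega, (w k).2, fun hM => ?_, fun hV => ?_⟩
    · have h2 := hM.1.2.1
      simp only at h2
      omega
    · obtain ⟨l, hl, hlk⟩ := (mem_wDVals D _ _).mp hV
      have h1 := h ⟨l, by omega⟩
      rw [← hlk] at h1
      have h2 := congrArg Fin.val (w.injective (Fin.ext (Nat.succ_injective h1)))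
      simp only at h2
      omega
  have hbdd : BddAbove
      {i | 1 ≤ i ∧ i ≤ n ∧ (i, (j : ℕ) + 1) ∉ MD n D ∧ i ∉ wDVals n D j} :=
    ⟨n, fun i hi => hi.2.1⟩
  have := le_csSup hbdd hmem
  rw [← wD_succ, ← h j] at this
  omega

/-- The set of exceedances of a permutation. -/
def exceedances (w : Equiv.Perm (Fin n)) : Set (ℕ × ℕ) :=
  {γ | ∃ k : Fin n, k < w k ∧ γ = ((w k : ℕ) + 1, (k : ℕ) + 1)}

theorem isBasic_exceedances (w : Equiv.Perm (Fin n)) : IsBasic n (exceedances w) := by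
  refine ⟨?_, ?_, ?_⟩
  · rintro _ ⟨k, hk, rfl⟩
    rw [Fin.lt_def] at hk
    exact ⟨by simp, by simpa using hk, (w k).2⟩
  · rintro _ ⟨k, hk, rfl⟩ _ ⟨l, hl, rfl⟩ h
    have : w k = w l := Fin.ext (Nat.succ_injective h)
    rw [w.injective this]
  · rintro _ ⟨k, hk, rfl⟩ _ ⟨l, hl, rfl⟩ h
    have : k = l := Fin.ext (Nat.succ_injective h)
    rw [this]

theorem eq_wD_exceedances_of_avoids (w : Equiv.Perm (Fin n)) (hw : Avoids w) :
    ∀ j : Fin n, ((w j : ℕ) + 1) = wD n (exceedances w) ((j : ℕ) + 1) := by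
  intro ⟨j, hj⟩
  induction j using Nat.strong_induction_on with
  | _ j ih =>
  have hprev : ∀ i, i ∈ wDVals n (exceedances w) j ↔
      ∃ l : Fin n, (l : ℕ) < j ∧ i = (w l : ℕ) + 1 := by
    intro i
    rw [mem_wDVals]
    constructor
    · rintro ⟨l, hl, rfl⟩
      exact ⟨⟨l, by omega⟩, hl, (ih l hl (by omega)).symm⟩
    · rintro ⟨l, hl, rfl⟩
      exact ⟨l, hl, ih l hl l.2⟩
  simp only [wD_succ]
  symm
  apply IsGreatest.csSup_eq
  refine ⟨⟨by omega, (w ⟨j, hj⟩).2, fun hM => ?_, fun hV => ?_⟩, ?_⟩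
  · have h2 := hM.1.2.1
    refine hM.2.2 ⟨⟨j, hj⟩, ?_, rfl⟩
    simp only at h2
    rw [Fin.lt_def]
    simp only
    omega
  · obtain ⟨l, hl, hlj⟩ := (hprev _).mp hV
    have h2 := congrArg Fin.val (w.injective (Fin.ext (Nat.succ_injective hlj)))
    simp only at h2
    omega
  · rintro i ⟨hi1, hin, hM, hV⟩
    by_contra hlt
    rw [not_le] at hlt
    obtain ⟨k, hk⟩ := w.surjective ⟨i - 1, by omega⟩
    have hik : i = (w k : ℕ) + 1 := by rw [hk]; simp only; omega
    subst hik
    have hjk : j ≤ k := by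
      by_contra hkj
      exact hV ((hprev _).mpr ⟨k, by omega, rfl⟩)
    have hjk' : (⟨j, hj⟩ : Fin n) < k := by
      refine lt_of_le_of_ne hjk fun h => ?_
      rw [h] at hlt
      omega
    have hjw := hw ⟨j, hj⟩ k hjk' (by rw [Fin.lt_def]; omega)
    rw [Fin.lt_def] at hjw
    simp only at hjw
    refine hM ⟨⟨by simp, by simpa using hjw, hin⟩, ?_, ?_⟩
    · rintro ⟨-, β, γ, hβ, h | h, l, hl, hγ⟩
      · obtain ⟨h1, rfl⟩ := h
        simp only [Prod.mk.injEq] at h1 hγ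
        refine hV ((hprev _).mpr ⟨l, ?_, hγ.1⟩)
        have := hβ.2.1
        omega
      · obtain ⟨h1, rfl⟩ := h
        simp only [Prod.mk.injEq] at h1 hγ
        have h3 : (⟨j, hj⟩ : Fin n) = l := Fin.ext (Nat.succ_injective hγ.2)
        have := hβ.2.1
        rw [← h3] at hγ
        omega
    · rintro ⟨l, hl, hγ⟩
      simp only [Prod.mk.injEq] at hγ
      have h3 : (⟨j, hj⟩ : Fin n) = l := Fin.ext (Nat.succ_injective hγ.2)
      rw [← h3] at hγ
      omega

theorem exists_eq_wD_iff_avoids (w : Equiv.Perm (Fin n)) :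
    (∃ D : Set (ℕ × ℕ), IsBasic n D ∧ ∀ j : Fin n, ((w j : ℕ) + 1) = wD n D ((j : ℕ) + 1)) ↔
      Avoids w :=
  ⟨fun ⟨D, _, h⟩ => avoids_of_eq_wD w D h,
    fun h => ⟨exceedances w, isBasic_exceedances w, eq_wD_exceedances_of_avoids w h⟩⟩

/-! ### The cone property for avoiding permutations -/

theorem card_filter_Ico {a b : ℕ} (hb : b ≤ n) :
    (Finset.univ.filter fun k : Fin n => a ≤ (k : ℕ) ∧ (k : ℕ) < b).card = b - a := by
  rw [← Nat.card_Ico, ← Finset.card_map Fin.valEmbedding]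
  congr 1
  ext x
  simp only [Finset.mem_map, Finset.mem_filter, Finset.mem_univ, true_and, Fin.valEmbedding_apply,
    Finset.mem_Ico]
  exact ⟨fun ⟨k, hk, h⟩ => h ▸ hk, fun h => ⟨⟨x, by omega⟩, h, rfl⟩⟩

theorem exists_diagonal_corner_card_le (w : Equiv.Perm (Fin n)) (hw : Avoids w) {i j : ℕ}
    (hij : i ≤ j) (hj : j ≤ n) : ∃ m, i ≤ m ∧ m ≤ j ∧
      (m - i) + (j - m) + (Finset.univ.filter fun k : Fin n => m ≤ (w k : ℕ) ∧ (k : ℕ) < m).card ≤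
        (Finset.univ.filter fun k : Fin n => i ≤ (w k : ℕ) ∧ (k : ℕ) < j).card := by
  obtain ⟨m, him, hmj, hrow, hcol⟩ : ∃ m, i ≤ m ∧ m ≤ j ∧
      (∀ k : Fin n, i ≤ (w k : ℕ) → (w k : ℕ) < m → (k : ℕ) < m) ∧
      (∀ k : Fin n, m ≤ (k : ℕ) → (k : ℕ) < j → i ≤ (w k : ℕ)) := by
    by_cases hB : ∃ b, b < j ∧ i ≤ b ∧ ∃ h : b < n, (w ⟨b, h⟩ : ℕ) < i
    · obtain ⟨b, ⟨hbj, hib, hbn, hwb⟩, hmax⟩ :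
          ∃ b, (b < j ∧ i ≤ b ∧ ∃ h : b < n, (w ⟨b, h⟩ : ℕ) < i) ∧
            ∀ k : Fin n, b < (k : ℕ) → (k : ℕ) < j → i ≤ (w k : ℕ) := by
        let p : ℕ → Prop := fun b => b < j ∧ i ≤ b ∧ ∃ h : b < n, (w ⟨b, h⟩ : ℕ) < i
        obtain ⟨b₀, hb₀⟩ := hB
        have hp : p (Nat.findGreatest p j) := Nat.findGreatest_spec (P := p) hb₀.1.le hb₀
        refine ⟨Nat.findGreatest p j, hp, fun k hk hkj => ?_⟩
        by_contra hlt
        exact Nat.findGreatest_is_greatest hk hkj.le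
          ⟨hkj, by have := hp.2.1; omega, k.2, by simpa using hlt⟩
      refine ⟨b + 1, by omega, by omega, fun k hik hkm => ?_, fun k hk => hmax k hk⟩
      by_contra hkb
      have := hw ⟨b, hbn⟩ k (by rw [Fin.lt_def]; simp only; omega) (by rw [Fin.lt_def]; omega)
      rw [Fin.lt_def] at this
      simp only at this
      omega
    · push Not at hB
      exact ⟨i, le_rfl, hij, fun k h1 h2 => by omega, fun k h1 h2 => hB k h2 h1 k.2⟩
  refine ⟨m, him, hmj, ?_⟩
  have hA : (Finset.univ.filter fun k : Fin n => i ≤ (w k : ℕ) ∧ (w k : ℕ) < m).card = m - i := by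
    rw [← card_filter_Ico (n := n) (hmj.trans hj), ← Finset.card_map w.toEmbedding]
    congr 1
    ext x
    simp only [Finset.mem_map, Finset.mem_filter, Finset.mem_univ, true_and, Equiv.coe_toEmbedding]
    exact ⟨fun ⟨k, hk, h⟩ => h ▸ hk, fun h => ⟨w.symm x, by simpa using h, by simp⟩⟩
  rw [← hA, ← card_filter_Ico (n := n) (a := m) hj, ← Finset.card_union_of_disjoint,
    ← Finset.card_union_of_disjoint]
  · refine Finset.card_le_card fun k hk => ?_
    simp only [Finset.mem_union, Finset.mem_filter, Finset.mem_univ, true_and] at hk ⊢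
    rcases hk with (hk | hk) | hk
    · have := hrow k hk.1 hk.2
      omega
    · exact ⟨hcol k hk.1 hk.2, hk.2⟩
    · omega
  · rw [Finset.disjoint_left]
    intro k hk hk'
    simp only [Finset.mem_union, Finset.mem_filter, Finset.mem_univ, true_and] at hk hk'
    omega
  · rw [Finset.disjoint_left]
    intro k hk hk'
    simp only [Finset.mem_filter, Finset.mem_univ, true_and] at hk hk'
    have := hrow k hk.1 hk.2
    omega

theorem finite_setOf_det_add_smul_eq_zero (A B : Matrix (Fin n) (Fin n) K) (hA : A.det ≠ 0) :
    {ε : K | (A + ε • B).det = 0}.Finite := by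
  let p : Polynomial K := (B.map Polynomial.C * diagonal (fun _ => Polynomial.X)
    + A.map Polynomial.C).det
  have hp : ∀ ε, p.eval ε = (A + ε • B).det := by
    intro ε
    rw [← Polynomial.coe_evalRingHom, RingHom.map_det]
    congr 1
    ext a b
    simp only [RingHom.mapMatrix_apply, Matrix.map_apply, Matrix.add_apply, mul_diagonal,
      Polynomial.coe_evalRingHom, Polynomial.eval_add, Polynomial.eval_mul, Polynomial.eval_C,
      Polynomial.eval_X, Matrix.smul_apply, smul_eq_mul]
    ring
  have hp0 : p ≠ 0 := by
    intro h
    have := hp 0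
    rw [h] at this
    simp at this
    exact hA this.symm
  refine (p.roots.toFinset.finite_toSet).subset fun ε hε => ?_
  rw [Set.mem_ofPred_eq, ← hp] at hε
  simpa [hp0] using hε

theorem corner_add_smul (A B : Matrix (Fin n) (Fin n) K) (ε : K) (i j : ℕ) :
    corner (A + ε • B) i j = corner A i j + ε • corner B i j := by
  simp [corner, Matrix.mul_add, Matrix.add_mul]

theorem le_rank_of_det_ne_zero (M : Matrix (Fin n) (Fin n) K) (p : Fin n → Prop) [DecidablePred p]
    (h : (M + diagonal fun k => if p k then (0 : K) else 1).det ≠ 0) :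
    (Finset.univ.filter p).card ≤ M.rank := by
  have h1 := rank_of_det_ne_zero h
  have h2 := rank_add_le M (diagonal fun k => if p k then (0 : K) else 1)
  have h3 : (diagonal fun k => if p k then (0 : K) else 1).rank =
      (Finset.univ.filter fun k => ¬ p k).card := by
    rw [← rank_diagonal_ite (K := K)]
    congr 2
    ext k
    split_ifs <;> simp_all
  have h4 := Finset.card_filter_add_card_filter_not (s := (Finset.univ : Finset (Fin n))) p
  simp only [Finset.card_univ] at h4
  omega

theorem permMat_symm_mul_corner (w : Equiv.Perm (Fin n)) (i j : ℕ) :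
    permMat n K w.symm * corner (permMat n K w) i j =
      diagonal fun k : Fin n => if i ≤ (w k : ℕ) ∧ (k : ℕ) < j then (1 : K) else 0 := by
  ext a b
  rw [permMat_mul_apply, corner_apply, permMat, diagonal_apply, Equiv.symm_symm]
  by_cases hab : a = b
  · simp [hab]
  · simp [hab]

theorem finite_setOf_rank_corner_lt (w : Equiv.Perm (Fin n)) (u : Matrix (Fin n) (Fin n) K)
    (i j : ℕ) : {ε : K | (corner (permMat n K w + ε • u) i j).rank <
      (corner (permMat n K w) i j).rank}.Finite := by
  refine (finite_setOf_det_add_smul_eq_zero 1 (permMat n K w.symm * corner u i j)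
    (by simp)).subset fun ε hε => ?_
  by_contra hdet
  rw [Set.mem_ofPred_eq] at hε hdet
  refine absurd hε (not_lt.mpr ?_)
  rw [rank_corner_permMat]
  refine (le_rank_of_det_ne_zero (permMat n K w.symm * corner (permMat n K w + ε • u) i j)
    _ ?_).trans (rank_mul_le_right _ _)
  convert hdet using 2
  rw [corner_add_smul, Matrix.mul_add, permMat_symm_mul_corner, Matrix.mul_smul, add_right_comm,
    diagonal_add]
  congr 1
  rw [← diagonal_one]
  congr 1
  ext k
  split_ifs <;> simp

theorem matOf_smul (t : K) (v : PRoot n → K) : matOf n K (t • v) = t • matOf n K v := by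
  ext a b
  simp only [matOf, Matrix.smul_apply]
  split_ifs <;> simp

theorem matOf_apply_of_le (v : PRoot n → K) {a b : Fin n} (h : a ≤ b) : matOf n K v a b = 0 := by
  rw [matOf, dif_neg]
  rintro ⟨-, h2, -⟩
  simp only at h2
  rw [Fin.le_def] at h
  omega

theorem finite_setOf_smul_inv_notMem_YwCell (w : Equiv.Perm (Fin n)) (hw : Avoids w)
    {v : PRoot n → K} (hv : v ∈ YwCell n K w) :
    {t : K | t ≠ 0 ∧ t⁻¹ • v ∉ YwCell n K w}.Finite := by
  obtain ⟨b, c, hb, hc, hbc⟩ := hv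
  set u := b⁻¹ * c⁻¹ with hu
  have hscale : ∀ t : K, t • (1 : Matrix (Fin n) (Fin n) K) + matOf n K v =
      b * (permMat n K w + (t - 1) • u) * c := by
    intro t
    rw [Matrix.mul_add, Matrix.add_mul, ← hbc, Matrix.mul_smul, Matrix.smul_mul, hu,
      mul_nonsing_inv_cancel_left _ _ hb.1, nonsing_inv_mul _ hc.1, sub_smul, one_smul]
    abel
  let F : Set K := ⋃ i ∈ Finset.range (n + 1), ⋃ j ∈ Finset.range (n + 1),
    {ε : K | (corner (permMat n K w + ε • u) i j).rank < (corner (permMat n K w) i j).rank}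
  have hF : F.Finite := by
    refine Set.Finite.biUnion (Finset.finite_toSet _) fun i _ => ?_
    exact Set.Finite.biUnion (Finset.finite_toSet _) fun j _ => finite_setOf_rank_corner_lt w u i j
  refine (hF.image fun ε => ε + 1).subset ?_
  rintro t ⟨ht, htv⟩
  refine ⟨t - 1, ?_, by ring⟩
  by_contra htF
  have hlow : ∀ i j, i ≤ n → j ≤ n → (corner (permMat n K w) i j).rank ≤
      (corner (permMat n K w + (t - 1) • u) i j).rank := by
    intro i j hi hj
    by_contra hlt
    refine htF ?_
    simp only [F, Set.mem_iUnion]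
    exact ⟨i, Finset.mem_coe.mpr (Finset.mem_range.mpr (by omega)), j,
      Finset.mem_coe.mpr (Finset.mem_range.mpr (by omega)), not_le.mp hlt⟩
  have hdiag : ∀ i j, j ≤ i → corner (t • 1 + matOf n K v) i j = corner (1 + matOf n K v) i j := by
    intro i j hij
    ext a b
    rw [corner_apply, corner_apply]
    split_ifs with hab
    · have : a ≠ b := by rintro rfl; omega
      simp [Matrix.one_apply_ne this]
    · rfl
  obtain ⟨b', c', hb', hc', hbc'⟩ := exists_borel_of_rank_corner_eq (t • 1 + matOf n K v) w (by
    intro i j hi hj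
    refine le_antisymm ?_ ?_
    · rcases le_total j i with hji | hij
      · rw [hdiag i j hji, hbc, rank_corner_borel hb hc]
      · obtain ⟨m, him, hmj, hm⟩ := exists_diagonal_corner_card_le w hw hij hj
        refine (rank_corner_le_diagonal_corner _ him hmj).trans ?_
        rwa [hdiag m m le_rfl, hbc, rank_corner_borel hb hc, rank_corner_permMat,
          rank_corner_permMat]
    · rw [hscale, rank_corner_borel hb hc]
      exact hlow i j hi hj)
  refine htv ⟨b', t⁻¹ • c', hb', ⟨?_, fun x y hxy => ?_⟩, ?_⟩
  · rw [det_smul]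
    exact (IsUnit.mk0 _ (pow_ne_zero _ (inv_ne_zero ht))).mul hc'.1
  · rw [Matrix.smul_apply, hc'.2 x y hxy, smul_zero]
  · rw [Matrix.mul_smul, ← hbc', matOf_smul, smul_add, smul_smul, inv_mul_cancel₀ ht, one_smul]

theorem eval_smul_eq_sum (f : MvPolynomial (PRoot n) K) (v : PRoot n → K) (s : K) :
    MvPolynomial.eval (s • v) f = ∑ d ∈ Finset.range (f.totalDegree + 1),
      MvPolynomial.eval v (MvPolynomial.homogeneousComponent d f) * s ^ d := by
  conv_lhs => rw [← MvPolynomial.sum_homogeneousComponent f, map_sum]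
  refine Finset.sum_congr rfl fun d _ => ?_
  rw [MvPolynomial.eval_eq, MvPolynomial.eval_eq, Finset.sum_mul]
  refine Finset.sum_congr rfl fun m hm => ?_
  have hdeg := MvPolynomial.homogeneousComponent_isHomogeneous d f
    (MvPolynomial.mem_support_iff.mp hm)
  rw [mul_assoc]
  congr 1
  simp only [Pi.smul_apply, smul_eq_mul, mul_pow, Finset.prod_mul_distrib]
  rw [Finset.prod_pow_eq_pow_sum, mul_comm, ← hdeg]
  congr 2
  rw [Finsupp.weight_apply, Finsupp.sum]
  simp

theorem homogeneous_of_avoids [CharZero K] (w : Equiv.Perm (Fin n)) (hw : Avoids w)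
    (f : MvPolynomial (PRoot n) K) (hf : f ∈ vanishing (PRoot n) K (YwCell n K w)) (d : ℕ) :
    MvPolynomial.homogeneousComponent d f ∈ vanishing (PRoot n) K (YwCell n K w) := by
  intro v hv
  let q : Polynomial K := ∑ d ∈ Finset.range (f.totalDegree + 1),
    Polynomial.C (MvPolynomial.eval v (MvPolynomial.homogeneousComponent d f)) * Polynomial.X ^ d
  have hq : ∀ s, q.eval s = MvPolynomial.eval (s • v) f := by
    intro s
    rw [eval_smul_eq_sum]
    simp [q, Polynomial.eval_finsetSum]
  have hq0 : q = 0 := by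
    refine Polynomial.eq_zero_of_infinite_isRoot q ?_
    have hfin := (finite_setOf_smul_inv_notMem_YwCell w hw hv).union (Set.finite_singleton (0 : K))
    have hinf := hfin.infinite_compl.image (f := fun t : K => t⁻¹) inv_injective.injOn
    refine hinf.mono ?_
    rintro _ ⟨t, ht, rfl⟩
    simp only [Set.mem_compl_iff, Set.mem_union, Set.mem_ofPred_eq, Set.mem_singleton_iff] at ht
    rw [Set.mem_ofPred_eq, Polynomial.IsRoot, hq]
    exact hf _ (by tauto)
  by_cases hd : d < f.totalDegree + 1
  · have := congrArg (fun p => Polynomial.coeff p d) hq0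
    simpa [q, Polynomial.finsetSum_coeff, Polynomial.coeff_C_mul, Polynomial.coeff_X_pow, hd]
      using this
  · rw [MvPolynomial.homogeneousComponent_eq_zero _ _ (by omega), map_zero]


/-- The minor of `M` with rows `σ x` and columns `x`, for `x` satisfying `p`, completed by an
identity block to an `n × n` matrix. -/
noncomputable def minorMat {R : Type} [CommRing R] (σ : Fin n → Fin n) (p : Fin n → Prop)
    (M : Matrix (Fin n) (Fin n) R) : Matrix (Fin n) (Fin n) R :=
  of fun x y => if p x ∧ p y then M (σ x) y else if x = y then 1 else 0

theorem minorMat_apply {R : Type} [CommRing R] (σ : Fin n → Fin n) (p : Fin n → Prop)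
    (M : Matrix (Fin n) (Fin n) R) (x y : Fin n) :
    minorMat σ p M x y = if p x ∧ p y then M (σ x) y else if x = y then 1 else 0 := rfl

theorem card_le_rank_corner_of_det_minorMat_ne_zero (σ : Fin n → Fin n) (p : Fin n → Prop)
    (M : Matrix (Fin n) (Fin n) K) {i j : ℕ} (hp : ∀ x, p x → i ≤ (σ x : ℕ) ∧ (x : ℕ) < j)
    (h : (minorMat σ p M).det ≠ 0) :
    (Finset.univ.filter p).card ≤ (corner M i j).rank := by
  let T : Matrix (Fin n) (Fin n) K := of fun x z => if p x ∧ z = σ x then 1 else 0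
  have hT : ∀ (A : Matrix (Fin n) (Fin n) K) x y, (T * A) x y = if p x then A (σ x) y else 0 := by
    intro A x y
    rw [mul_apply]
    by_cases hx : p x <;> simp [T, hx]
  have hM : minorMat σ p M = T * corner M i j * (diagonal fun y => if p y then (1 : K) else 0) +
      diagonal fun y => if p y then (0 : K) else 1 := by
    ext x y
    rw [minorMat_apply, Matrix.add_apply, mul_diagonal, hT, corner_apply, diagonal_apply]
    by_cases hx : p x
    · by_cases hy : p y
      · simp [hx, hy, (hp x hx).1, (hp y hy).2]
      · simp [hx, hy, show x ≠ y by rintro rfl; exact hy hx]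
    · by_cases hxy : x = y
      · subst hxy
        simp [hx]
      · simp [hx, hxy]
  rw [hM] at h
  exact (le_rank_of_det_ne_zero _ p h).trans
    ((rank_mul_le_left _ _).trans (rank_mul_le_right _ _))

theorem det_minorMat_smul_ne_zero (σ : Fin n → Fin n) (p : Fin n → Prop)
    (M : Matrix (Fin n) (Fin n) K) {t : K} (ht : t ≠ 0) (h : (minorMat σ p M).det ≠ 0) :
    (minorMat σ p (t • M)).det ≠ 0 := by
  have hM : minorMat σ p (t • M) = (diagonal fun y => if p y then t else 1) * minorMat σ p M := by
    ext x y
    rw [diagonal_mul, minorMat_apply, minorMat_apply]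
    by_cases hx : p x
    · by_cases hy : p y
      · simp [hx, hy]
      · simp [hx, hy, show x ≠ y by rintro rfl; exact hy hx]
    · simp [hx]
  rw [hM, det_mul, det_diagonal]
  refine mul_ne_zero (Finset.prod_ne_zero_iff.mpr fun y _ => ?_) h
  split_ifs
  · exact ht
  · exact one_ne_zero

theorem det_permMat_ne_zero (w : Equiv.Perm (Fin n)) : (permMat n K w).det ≠ 0 :=
  (isUnit_det_permMat w).ne_zero

/-- `F` is given by a polynomial in the coordinates. -/
def IsPolyFun {σ : Type} (F : (σ → K) → K) : Prop :=
  ∃ P : MvPolynomial σ K, ∀ v, MvPolynomial.eval v P = F v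

theorem isPolyFun_coord {σ : Type} (i : σ) : IsPolyFun (K := K) fun v => v i :=
  ⟨MvPolynomial.X i, fun v => by simp⟩

theorem isPolyFun_const {σ : Type} (c : K) : IsPolyFun (σ := σ) fun _ => c :=
  ⟨MvPolynomial.C c, fun v => by simp⟩

theorem IsPolyFun.add {σ : Type} {F G : (σ → K) → K} (hF : IsPolyFun F) (hG : IsPolyFun G) :
    IsPolyFun fun v => F v + G v := by
  obtain ⟨P, hP⟩ := hF
  obtain ⟨Q, hQ⟩ := hG
  exact ⟨P + Q, fun v => by rw [map_add, hP, hQ]⟩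

theorem IsPolyFun.mul {σ : Type} {F G : (σ → K) → K} (hF : IsPolyFun F) (hG : IsPolyFun G) :
    IsPolyFun fun v => F v * G v := by
  obtain ⟨P, hP⟩ := hF
  obtain ⟨Q, hQ⟩ := hG
  exact ⟨P * Q, fun v => by rw [map_mul, hP, hQ]⟩

theorem IsPolyFun.sum {σ ι : Type} (s : Finset ι) {F : ι → (σ → K) → K}
    (hF : ∀ i ∈ s, IsPolyFun (F i)) : IsPolyFun fun v => ∑ i ∈ s, F i v := by
  choose! P hP using hF
  exact ⟨∑ i ∈ s, P i, fun v => by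
    rw [map_sum]
    exact Finset.sum_congr rfl fun i hi => hP i hi v⟩

theorem IsPolyFun.det {σ : Type} {M : (σ → K) → Matrix (Fin n) (Fin n) K}
    (hM : ∀ x y, IsPolyFun fun v => M v x y) : IsPolyFun fun v => (M v).det := by
  choose P hP using hM
  refine ⟨(of P).det, fun v => ?_⟩
  rw [RingHom.map_det]
  congr 1
  ext x y
  exact hP x y v

theorem IsPolyFun.matrix_mul {σ : Type} {M N : (σ → K) → Matrix (Fin n) (Fin n) K}
    (hM : ∀ x y, IsPolyFun fun v => M v x y) (hN : ∀ x y, IsPolyFun fun v => N v x y)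
    (x y : Fin n) : IsPolyFun fun v => (M v * N v) x y := by
  simp only [mul_apply]
  exact IsPolyFun.sum _ fun z _ => (hM x z).mul (hN z y)

theorem IsPolyFun.minorMat {σ : Type} {M : (σ → K) → Matrix (Fin n) (Fin n) K}
    (hM : ∀ x y, IsPolyFun fun v => M v x y) (τ : Fin n → Fin n) (p : Fin n → Prop)
    (x y : Fin n) : IsPolyFun fun v => minorMat τ p (M v) x y := by
  simp only [minorMat_apply]
  split_ifs
  · exact hM _ _
  · exact isPolyFun_const _
  · exact isPolyFun_const _

theorem exists_forall_ne_zero [Infinite K] {σ ι : Type} (s : Finset ι) {F : ι → (σ → K) → K}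
    (hF : ∀ i ∈ s, IsPolyFun (F i)) (hne : ∀ i ∈ s, ∃ v, F i v ≠ 0) :
    ∃ v, ∀ i ∈ s, F i v ≠ 0 := by
  choose! P hP using hF
  have h0 : ∏ i ∈ s, P i ≠ 0 := by
    refine Finset.prod_ne_zero_iff.mpr fun i hi h => ?_
    obtain ⟨v, hv⟩ := hne i hi
    exact hv (by rw [← hP i hi, h, map_zero])
  by_contra! hall
  refine h0 (MvPolynomial.funext fun v => ?_)
  obtain ⟨i, hi, hiv⟩ := hall v
  rw [map_prod, map_zero]
  exact Finset.prod_eq_zero hi ((hP i hi v).trans hiv)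

/-- The upper triangular part of the matrix with entries `v (x, y)`. -/
noncomputable def upperOf (v : Fin n × Fin n → K) : Matrix (Fin n) (Fin n) K :=
  of fun x y => if x ≤ y then v (x, y) else 0

theorem upperOf_apply (v : Fin n × Fin n → K) (x y : Fin n) :
    upperOf v x y = if x ≤ y then v (x, y) else 0 := rfl

theorem isPolyFun_upperOf (x y : Fin n) : IsPolyFun (K := K) fun v => upperOf v x y := by
  simp only [upperOf_apply]
  split_ifs
  · exact isPolyFun_coord _
  · exact isPolyFun_const _

/-- A witness of non-vanishing for the minors with rows `τ x` and columns `x < k` of the matrices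
`b * permMat n K w` with `b` upper triangular. -/
theorem exists_det_minorMat_upperOf_ne_zero (w ρ τ : Equiv.Perm (Fin n)) (k : ℕ)
    (hfix : ∀ y : Fin n, k ≤ (y : ℕ) → ρ y = y) (hle : ∀ y : Fin n, (y : ℕ) < k → τ (ρ y) ≤ w y) :
    ∃ v : Fin n × Fin n → K,
      (minorMat τ (fun x => (x : ℕ) < k) (upperOf v * permMat n K w)).det ≠ 0 := by
  refine ⟨fun z => if z.1 = τ (ρ (w.symm z.2)) then 1 else 0, ?_⟩
  convert det_permMat_ne_zero (K := K) ρ using 2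
  ext x y
  rw [minorMat_apply, mul_permMat_apply, upperOf_apply, permMat]
  by_cases hy : (y : ℕ) < k
  · have hρ : (ρ y : ℕ) < k := by
      by_contra hk
      have := ρ.injective (hfix (ρ y) (not_lt.mp hk))
      exact hk (by rwa [this])
    by_cases hxy : x = ρ y
    · have := hle y hy
      simp [hxy, hy, hρ, this]
    · by_cases hx : (x : ℕ) < k
      · simp [hx, hy, hxy]
      · simp [hx, hxy, show x ≠ y by rintro rfl; exact hx hy]
  · simp [hy, hfix y (not_lt.mp hy)]

theorem exists_perm_le (w : Equiv.Perm (Fin n)) (k : ℕ) :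
    ∃ ρ : Equiv.Perm (Fin n), (∀ y : Fin n, k ≤ (y : ℕ) → ρ y = y) ∧
      (∀ y : Fin n, (y : ℕ) < k → ρ y ≤ w y) ∧
      ∀ y : Fin n, (y : ℕ) < k → (w y : ℕ) < k → ρ y = w y := by
  let p : Fin n → Prop := fun y => k ≤ (y : ℕ) ∨ (w y : ℕ) < k
  let q : Fin n → Prop := fun z => k ≤ (z : ℕ) ∨ (w.symm z : ℕ) < k
  let e : {y // p y} ≃ {z // q z} :=
    { toFun := fun y => if h : k ≤ (y.1 : ℕ) then ⟨y.1, Or.inl h⟩ else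
        ⟨w y.1, Or.inr (by rw [Equiv.symm_apply_apply]; exact not_le.mp h)⟩
      invFun := fun z => if h : k ≤ (z.1 : ℕ) then ⟨z.1, Or.inl h⟩ else
        ⟨w.symm z.1, Or.inr (by rw [Equiv.apply_symm_apply]; exact not_le.mp h)⟩
      left_inv := by
        rintro ⟨y, hy⟩
        by_cases h : k ≤ (y : ℕ)
        · simp [h]
        · simp [h, not_le.mpr (hy.resolve_left h)]
      right_inv := by
        rintro ⟨z, hz⟩
        by_cases h : k ≤ (z : ℕ)
        · simp [h]
        · simp [h, not_le.mpr (hz.resolve_left h)] }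
  have hfix : ∀ y : Fin n, k ≤ (y : ℕ) → e.extendSubtype y = y := by
    intro y hy
    rw [Equiv.extendSubtype_apply_of_mem e y (Or.inl hy)]
    simp [e, hy]
  have hw : ∀ y : Fin n, (y : ℕ) < k → (w y : ℕ) < k → e.extendSubtype y = w y := by
    intro y hy hwy
    rw [Equiv.extendSubtype_apply_of_mem e y (Or.inr hwy)]
    simp [e, not_le.mpr hy]
  refine ⟨e.extendSubtype, hfix, fun y hy => ?_, hw⟩
  by_cases hwy : (w y : ℕ) < k
  · exact (hw y hy hwy).le
  · have hlt : (e.extendSubtype y : ℕ) < k := by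
      by_contra hk
      have := e.extendSubtype.injective (hfix _ (not_lt.mp hk))
      rw [this] at hk
      exact hk hy
    rw [Fin.le_def]
    omega

theorem minorMat_mulVec_of_support (σ : Fin n → Fin n) {k : ℕ} (g : Matrix (Fin n) (Fin n) K)
    {z : Fin n → K} (hz : ∀ y : Fin n, k ≤ (y : ℕ) → z y = 0) (x : Fin n) :
    (minorMat σ (fun y => (y : ℕ) < k) g *ᵥ z) x = if (x : ℕ) < k then (g *ᵥ z) (σ x) else 0 := by
  rw [mulVec, dotProduct]
  split_ifs with hx
  · refine Finset.sum_congr rfl fun y _ => ?_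
    by_cases hy : (y : ℕ) < k
    · simp [minorMat_apply, hx, hy]
    · simp [hz y (not_lt.mp hy)]
  · refine Finset.sum_eq_zero fun y _ => ?_
    by_cases hxy : x = y
    · rw [hz y (by omega), mul_zero]
    · simp [minorMat_apply, hx, hxy]

theorem minorMat_mulVec_of_le (σ : Fin n → Fin n) {k : ℕ} (g : Matrix (Fin n) (Fin n) K)
    (z : Fin n → K) {x : Fin n} (hx : k ≤ (x : ℕ)) :
    (minorMat σ (fun y => (y : ℕ) < k) g *ᵥ z) x = z x := by
  simp [mulVec, dotProduct, minorMat_apply, not_lt.mpr hx]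

/-- A matrix all of whose leading principal minors are invertible becomes lower unitriangular
after multiplication by a suitable upper triangular matrix. -/
theorem exists_borel_mul_lower (g : Matrix (Fin n) (Fin n) K)
    (hg : ∀ k ≤ n, (minorMat id (fun y => (y : ℕ) < k) g).det ≠ 0) :
    ∃ c : Matrix (Fin n) (Fin n) K, InBorel c ∧ (∀ x y, x < y → (g * c) x y = 0) ∧ ∀ x, (g * c) x x = 1 := by
  have key : ∀ y : Fin n, ∃ z : Fin n → K, (∀ x, y < x → z x = 0) ∧ z y ≠ 0 ∧
      (∀ x, x < y → (g *ᵥ z) x = 0) ∧ (g *ᵥ z) y = 1 := by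
    intro y
    set G := minorMat id (fun x => (x : ℕ) < y + 1) g with hG
    let z := G⁻¹ *ᵥ Pi.single y 1
    have hz : G *ᵥ z = Pi.single y 1 := by
      rw [mulVec_mulVec, mul_nonsing_inv _ (IsUnit.mk0 _ (hg _ y.2)), one_mulVec]
    have hsupp : ∀ x : Fin n, (y : ℕ) + 1 ≤ x → z x = 0 := by
      intro x hx
      rw [← minorMat_mulVec_of_le id g z hx, ← hG, hz, Pi.single_eq_of_ne]
      rintro rfl
      omega
    have hgz : ∀ x : Fin n, x ≤ y → (g *ᵥ z) x = (Pi.single y 1 : Fin n → K) x := by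
      intro x hx
      rw [← hz, hG, minorMat_mulVec_of_support id g hsupp,
        if_pos (Nat.lt_succ_of_le (Fin.le_def.mp hx)), id]
    refine ⟨z, fun x hx => hsupp x hx, fun hzy => ?_, fun x hx => ?_, ?_⟩
    · have hsupp' : ∀ x : Fin n, (y : ℕ) ≤ x → z x = 0 := by
        intro x hx
        rcases hx.eq_or_lt with h | h
        · rw [← Fin.ext h, hzy]
        · exact hsupp x h
      refine hg y y.2.le (exists_mulVec_eq_zero_iff.mp ⟨z, fun h0 => ?_, ?_⟩)
      · rw [h0, mulVec_zero] at hz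
        simpa using congrFun hz y
      · ext x
        rw [minorMat_mulVec_of_support id g hsupp']
        split_ifs with hx
        · rw [id, hgz x (Fin.le_def.mpr hx.le), Pi.single_eq_of_ne]
          · rfl
          · rintro rfl
            omega
        · rfl
    · rw [hgz x hx.le, Pi.single_eq_of_ne hx.ne]
    · rw [hgz y le_rfl, Pi.single_eq_same]
  choose z hz1 hz2 hz3 hz4 using key
  have hup : (of fun x y => z y x).IsUpperTriangular := fun x y h => hz1 y x h
  refine ⟨of fun x y => z y x, ⟨?_, hup⟩, fun x y hxy => hz3 y x hxy, hz4⟩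
  rw [det_of_isUpperTriangular hup]
  exact IsUnit.mk0 _ (Finset.prod_ne_zero_iff.mpr fun x _ => hz2 x)

theorem one_add_matOf_vecOf (L : Matrix (Fin n) (Fin n) K) (h0 : ∀ x y, x < y → L x y = 0)
    (h1 : ∀ x, L x x = 1) : 1 + matOf n K (vecOf n K L) = L := by
  ext x y
  rw [Matrix.add_apply]
  rcases lt_trichotomy x y with h | h | h
  · rw [matOf_apply_of_le _ h.le, h0 x y h, one_apply_ne h.ne, add_zero]
  · subst h
    rw [matOf_apply_of_le _ le_rfl, h1, one_apply_eq, add_zero]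
  · rw [one_apply_ne h.ne', zero_add, matOf, dif_pos ⟨by omega, by simpa using h, x.2⟩]
    simp [vecOf]

theorem exists_generic_borel [Infinite K] (w : Equiv.Perm (Fin n)) {j j' k : Fin n}
    (hj' : (j' : ℕ) = j + 1) (hjk : j < k) (hkj : w k ≤ j) :
    ∃ b : Matrix (Fin n) (Fin n) K, InBorel b ∧
      (∀ i ≤ n, (minorMat id (fun y => (y : ℕ) < i) (b * permMat n K w)).det ≠ 0) ∧
      (minorMat (Equiv.swap j j') (fun y => (y : ℕ) < j + 1) (b * permMat n K w)).det ≠ 0 ∧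
      b⁻¹ (w k) j ≠ 0 := by
  have hmul : ∀ x y, IsPolyFun fun v : Fin n × Fin n → K =>
      (upperOf v * permMat n K w) x y :=
    IsPolyFun.matrix_mul isPolyFun_upperOf fun _ _ => isPolyFun_const _
  obtain ⟨v, hv⟩ := exists_forall_ne_zero (K := K) (Finset.univ : Finset (Fin (n + 1) ⊕ Bool))
    (F := fun i v => match i with
      | .inl i => (minorMat id (fun y => (y : ℕ) < i) (upperOf v * permMat n K w)).det
      | .inr true => (minorMat (Equiv.swap j j') (fun y => (y : ℕ) < j + 1)
          (upperOf v * permMat n K w)).det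
      | .inr false => (upperOf v).adjugate (w k) j)
    (by
      rintro (i | _ | _) -
      · exact IsPolyFun.det (IsPolyFun.minorMat hmul _ _)
      · simp only [adjugate_apply]
        refine IsPolyFun.det fun x y => ?_
        simp only [updateRow_apply]
        split_ifs
        · exact isPolyFun_const _
        · exact isPolyFun_upperOf x y
      · exact IsPolyFun.det (IsPolyFun.minorMat hmul _ _))
    (by
      rintro (i | _ | _) -
      · obtain ⟨ρ, h1, h2, -⟩ := exists_perm_le w i
        exact exists_det_minorMat_upperOf_ne_zero w ρ 1 i h1 h2
      · refine ⟨fun z => if z.1 = w k then (if z.2 = j then 1 else 0)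
          else if z.1 = z.2 then 1 else 0, ?_⟩
        simp only [adjugate_apply]
        convert det_permMat_ne_zero (K := K) (Equiv.swap (w k) j) using 2
        ext x y
        rw [updateRow_apply, upperOf_apply, permMat, Equiv.swap_apply_def]
        by_cases hxj : x = j
        · subst hxj
          by_cases hy : y = w k
          · simp [hy]
          · by_cases hyx : y = x
            · subst hyx
              simp [hy]
            · simp [hy, hyx, Ne.symm hyx]
        · by_cases hxk : x = w k
          · subst hxk
            by_cases hy : y = j
            · subst hy
              simp [hxj, hkj, Ne.symm hxj]
            · by_cases hy' : y = w k
              · simp [hxj, hy']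
              · simp [hxj, hy, hy', Ne.symm hy']
          · by_cases hxy : x = y
            · subst hxy
              simp [hxj, hxk]
            · by_cases hy : y = j
              · subst hy
                simp only [hxj, hxk, if_false]
                split_ifs <;> simp_all
              · by_cases hy' : y = w k
                · simp [hxj, hxk, hy']
                · simp [hxj, hxk, hy, hy', hxy]
      · obtain ⟨ρ, h1, h2, h3⟩ := exists_perm_le w (j + 1)
        refine exists_det_minorMat_upperOf_ne_zero w (ρ.trans (Equiv.swap (w k) j))
          (Equiv.swap j j') (j + 1) (fun y hy => ?_) fun y hy => ?_
        · rw [Equiv.trans_apply, h1 y hy, Equiv.swap_apply_of_ne_of_ne]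
          · rintro rfl
            rw [Fin.le_def] at hkj
            omega
          · rintro rfl
            omega
        · have hρy := h2 y hy
          rw [Equiv.trans_apply]
          by_cases hya : ρ y = w k
          · rw [hya, Equiv.swap_apply_left, Equiv.swap_apply_left, Fin.le_def, hj']
            by_contra hlt
            have := h3 y hy (by omega)
            have := w.injective (this.symm.trans hya)
            subst this
            rw [Fin.lt_def] at hjk
            omega
          · by_cases hyj : ρ y = j
            · rw [hyj, Equiv.swap_apply_right, Equiv.swap_apply_of_ne_of_ne]
              · exact hkj.trans (hyj ▸ hρy)
              · rintro h
                exact hya (hyj.trans h.symm)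
              · intro h
                rw [h, Fin.le_def] at hkj
                omega
            · rw [Equiv.swap_apply_of_ne_of_ne hya hyj, Equiv.swap_apply_of_ne_of_ne hyj]
              · exact hρy
              · intro h
                have h4 := ρ.injective (h.trans (h1 j' hj'.ge).symm)
                rw [h4] at hy
                omega)
  have hup : (upperOf v).IsUpperTriangular := by
    intro x y hxy
    rw [upperOf_apply, if_neg (not_le.mpr (show y < x from hxy))]
  have hdet : (upperOf v).det ≠ 0 := by
    have h := hv (.inl (Fin.last n)) (Finset.mem_univ _)
    have h2 : minorMat id (fun y : Fin n => (y : ℕ) < Fin.last n) (upperOf v * permMat n K w) =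
        upperOf v * permMat n K w := by
      ext x y
      simp [minorMat_apply]
    simp only [h2, det_mul] at h
    exact left_ne_zero_of_mul h
  refine ⟨upperOf v, ⟨IsUnit.mk0 _ hdet, fun x y h => hup h⟩, fun i hi => ?_,
    hv (.inr true) (Finset.mem_univ _), ?_⟩
  · exact hv (.inl ⟨i, Nat.lt_succ_of_le hi⟩) (Finset.mem_univ _)
  · rw [inv_def, Matrix.smul_apply, smul_eq_mul, Ring.inverse_eq_inv']
    exact mul_ne_zero (inv_ne_zero hdet) (hv (.inr false) (Finset.mem_univ _))

theorem inBorel_transvection {j j' : Fin n} (h : j < j') (μ : K) :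
    InBorel (transvection j j' μ) := by
  refine ⟨by rw [det_transvection_of_ne _ _ h.ne]; exact isUnit_one, fun x y hxy => ?_⟩
  rw [transvection, Matrix.add_apply, one_apply_ne hxy.ne', zero_add, single_apply, if_neg]
  rintro ⟨rfl, rfl⟩
  exact absurd h hxy.asymm

theorem transvection_inv {j j' : Fin n} (h : j ≠ j') (μ : K) :
    (transvection j j' μ)⁻¹ = transvection j j' (-μ) := by
  refine inv_eq_right_inv ?_
  rw [transvection_mul_transvection_same _ _ h, add_neg_cancel, transvection_zero]

theorem inBorel_diagonal {d : Fin n → K} (hd : ∀ x, d x ≠ 0) : InBorel (diagonal d) := by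
  refine ⟨?_, fun x y hxy => diagonal_apply_ne _ hxy.ne'⟩
  rw [det_diagonal]
  exact IsUnit.mk0 _ (Finset.prod_ne_zero_iff.mpr fun x _ => hd x)

/-- Each lower unitriangular `b * g * c` whose entry next to the diagonal in column `j` does not
vanish can be moved within its Bruhat cell so that the `(a, j)` entry of `b⁻¹ * c⁻¹` changes by a
prescribed product. -/
theorem exists_borel_modify [CharZero K] {b c g : Matrix (Fin n) (Fin n) K} (hb : InBorel b)
    (hc : InBorel c) (h0 : ∀ x y, x < y → (b * g * c) x y = 0) (h1 : ∀ x, (b * g * c) x x = 1)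
    {j j' : Fin n} (hj' : (j' : ℕ) = j + 1) (hx : (b * g * c) j' j ≠ 0) (a : Fin n) :
    ∃ b' c' : Matrix (Fin n) (Fin n) K, InBorel b' ∧ InBorel c' ∧
      (∀ x y, x < y → (b' * g * c') x y = 0) ∧ (∀ x, (b' * g * c') x x = 1) ∧
      (b'⁻¹ * c'⁻¹) a j = (b⁻¹ * c⁻¹) a j + b⁻¹ a j * c⁻¹ j j := by
  have hlt : j < j' := by rw [Fin.lt_def]; omega
  have hne : j ≠ j' := hlt.ne
  set L := b * g * c with hL
  set μ := (L j' j)⁻¹ with hμ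
  let d : Fin n → K := fun x => if x = j then 2 else if x = j' then 2⁻¹ else 1
  have hd : ∀ x, d x ≠ 0 := by
    intro x
    simp only [d]
    split_ifs <;> simp
  have hdinv : ∀ x, (d x)⁻¹ ≠ 0 := fun x => inv_ne_zero (hd x)
  have hdiag : (diagonal fun x => (d x)⁻¹)⁻¹ = diagonal d := by
    refine inv_eq_right_inv ?_
    rw [diagonal_mul_diagonal, ← diagonal_one]
    congr 1
    ext x
    exact inv_mul_cancel₀ (hd x)
  have hT := inBorel_transvection (K := K) hlt
  have hL' : ∀ x y, (transvection j j' μ * b * g * (c * transvection j j' (-(μ / 2)) *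
      diagonal fun x => (d x)⁻¹)) x y =
      (transvection j j' μ * L * transvection j j' (-(μ / 2))) x y * (d y)⁻¹ := by
    intro x y
    rw [← mul_diagonal (fun y => (d y)⁻¹), hL]
    simp only [Matrix.mul_assoc]
  have hrow : ∀ x y, (transvection j j' μ * L) x y = L x y + if x = j then μ * L j' y else 0 := by
    intro x y
    split_ifs with h
    · rw [h, transvection_mul_apply_same]
    · rw [transvection_mul_apply_of_ne _ _ _ _ h, add_zero]
  refine ⟨transvection j j' μ * b, c * transvection j j' (-(μ / 2)) * diagonal fun x => (d x)⁻¹,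
    (hT μ).mul hb, (hc.mul (hT _)).mul (inBorel_diagonal hdinv), fun x y hxy => ?_, fun x => ?_, ?_⟩
  · rw [hL']
    refine mul_eq_zero_of_left ?_ _
    by_cases hy : y = j'
    · subst hy
      rw [mul_transvection_apply_same, hrow, hrow, h0 x y hxy, h1]
      by_cases hxj : x = j
      · subst hxj
        rw [if_pos rfl, if_pos rfl, h1, hμ, inv_mul_cancel₀ hx]
        field_simp
        ring
      · have : x < j := lt_of_le_of_ne (by rw [Fin.lt_def] at hxy; rw [Fin.le_def]; omega) hxj
        rw [if_neg hxj, if_neg hxj, h0 x j this]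
        ring
    · rw [mul_transvection_apply_of_ne _ _ _ _ hy, hrow, h0 x y hxy]
      split_ifs with hxj
      · subst hxj
        have : j' < y := lt_of_le_of_ne (by rw [Fin.lt_def] at hxy; rw [Fin.le_def]; omega)
          (Ne.symm hy)
        rw [h0 j' y this]
        ring
      · ring
  · rw [hL']
    by_cases hxj : x = j
    · subst hxj
      rw [mul_transvection_apply_of_ne _ _ _ _ hne, hrow, if_pos rfl, h1, hμ, inv_mul_cancel₀ hx]
      simp only [d, if_true]
      field_simp
      norm_num
    · by_cases hxj' : x = j'
      · subst hxj'
        rw [mul_transvection_apply_same, hrow, hrow, if_neg hxj, if_neg hxj, h1, hμ]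
        simp only [d, if_neg hxj, if_true]
        field_simp
        ring
      · rw [mul_transvection_apply_of_ne _ _ _ _ hxj', hrow, if_neg hxj, h1]
        simp [d, hxj, hxj']
  · have hinv : (transvection j j' μ * b)⁻¹ * (c * transvection j j' (-(μ / 2)) *
        diagonal fun x => (d x)⁻¹)⁻¹ =
        b⁻¹ * (transvection j j' (-μ) * (diagonal d * (transvection j j' (μ / 2) * c⁻¹))) := by
      rw [Matrix.mul_inv_rev, Matrix.mul_inv_rev, Matrix.mul_inv_rev, hdiag,
        transvection_inv hne, transvection_inv hne, neg_neg]
      simp only [Matrix.mul_assoc]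
    have hc0 : c⁻¹ j' j = 0 := hc.inv.2 _ _ hlt
    have hcol : ∀ x, (transvection j j' (-μ) * (diagonal d *
        (transvection j j' (μ / 2) * c⁻¹))) x j = d x * c⁻¹ x j := by
      intro x
      by_cases hxj : x = j
      · subst hxj
        rw [transvection_mul_apply_same, diagonal_mul, diagonal_mul, transvection_mul_apply_same,
          transvection_mul_apply_of_ne _ _ _ _ hne.symm, hc0]
        ring
      · rw [transvection_mul_apply_of_ne _ _ _ _ hxj, diagonal_mul,
          transvection_mul_apply_of_ne _ _ _ _ hxj]
    rw [hinv, mul_apply, mul_apply, ← Finset.add_sum_erase _ _ (Finset.mem_univ j),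
      ← Finset.add_sum_erase _ _ (Finset.mem_univ j), hcol]
    rw [Finset.sum_congr rfl fun x hx => by
      rw [hcol x, show d x * c⁻¹ x j = c⁻¹ x j by
        by_cases hxj' : x = j'
        · rw [hxj', hc0, mul_zero]
        · simp [d, hxj', Finset.ne_of_mem_erase hx]]]
    simp only [d, if_true]
    ring

theorem exists_borel_inv_mul_inv_ne_zero [CharZero K] (w : Equiv.Perm (Fin n)) {j k : Fin n}
    (hjk : j < k) (hkj : w k ≤ j) :
    ∃ (b c : Matrix (Fin n) (Fin n) K) (v : PRoot n → K), InBorel b ∧ InBorel c ∧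
      1 + matOf n K v = b * permMat n K w * c ∧ (b⁻¹ * c⁻¹) (w k) j ≠ 0 := by
  have hjn : (j : ℕ) + 1 < n := by
    have := k.2
    rw [Fin.lt_def] at hjk
    omega
  obtain ⟨j', hj'⟩ : ∃ j' : Fin n, (j' : ℕ) = j + 1 := ⟨⟨j + 1, hjn⟩, rfl⟩
  obtain ⟨b, hb, hlead, hswap, hinv⟩ := exists_generic_borel (K := K) w hj' hjk hkj
  obtain ⟨c, hc, h0, h1⟩ := exists_borel_mul_lower _ hlead
  by_cases hu : (b⁻¹ * c⁻¹) (w k) j = 0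
  · have hx : (b * permMat n K w * c) j' j ≠ 0 := by
      intro hx
      refine hswap (exists_mulVec_eq_zero_iff.mp ⟨c.col j, fun h => ?_, ?_⟩)
      · exact hc.diag_ne_zero j (congrFun h j)
      · have hcol : ∀ x, ((b * permMat n K w) *ᵥ c.col j) x = (b * permMat n K w * c) x j :=
          fun x => rfl
        ext x
        rw [minorMat_mulVec_of_support (k := j + 1) _ _ (z := c.col j)
          fun y hy => hc.2 y j (Fin.lt_def.mpr hy)]
        split_ifs with hxj
        · rw [hcol]
          by_cases hxe : x = j
          · rw [hxe, Equiv.swap_apply_left, hx]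
            rfl
          · have hlt : x < j := lt_of_le_of_ne (Fin.le_def.mpr (by omega)) hxe
            rw [Equiv.swap_apply_of_ne_of_ne hxe, h0 x j hlt]
            · rfl
            · rintro rfl
              omega
        · rfl
    obtain ⟨b', c', hb', hc', h0', h1', hu'⟩ := exists_borel_modify hb hc h0 h1 hj' hx (w k)
    refine ⟨b', c', _, hb', hc', one_add_matOf_vecOf _ h0' h1', ?_⟩
    rw [hu', hu, zero_add]
    exact mul_ne_zero hinv (hc.inv.diag_ne_zero j)
  · exact ⟨b, c, _, hb, hc, one_add_matOf_vecOf _ h0 h1, hu⟩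

theorem det_updateRow_one (j : Fin n) (r : Fin n → K) :
    ((1 : Matrix (Fin n) (Fin n) K).updateRow j r).det = r j := by
  rw [← cramer_transpose_apply, transpose_one, cramer_one]
  rfl

theorem eval_smul_eq_zero_of_homogeneous {S : Set (PRoot n → K)}
    (hS : ∀ f ∈ vanishing (PRoot n) K S, ∀ d : ℕ,
      MvPolynomial.homogeneousComponent d f ∈ vanishing (PRoot n) K S)
    {f : MvPolynomial (PRoot n) K} (hf : f ∈ vanishing (PRoot n) K S) {v : PRoot n → K}
    (hv : v ∈ S) (t : K) : MvPolynomial.eval (t • v) f = 0 := by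
  rw [eval_smul_eq_sum]
  exact Finset.sum_eq_zero fun d _ => mul_eq_zero_of_left (hS f hf d v hv) _

/-- Adjoining row `w k` and column `j` to the minor of `permMat n K w` in the corner with rows
`≥ w k` and columns `≤ j` gives a minor that is nonzero on a generic perturbation. -/
theorem finite_setOf_det_minorMat_eq_zero (w : Equiv.Perm (Fin n)) {j k : Fin n} (hjk : j < k)
    (u : Matrix (Fin n) (Fin n) K) (hu : u (w k) j ≠ 0) :
    {ε : K | ε ≠ 0 ∧ (minorMat (fun x => if x = j then w k else w x)
      (fun x => x = j ∨ (w k ≤ w x ∧ (x : ℕ) < j + 1))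
      (permMat n K w + ε • u)).det = 0}.Finite := by
  set p : Fin n → Prop := fun x => x = j ∨ (w k ≤ w x ∧ (x : ℕ) < j + 1) with hp
  have hpk : ¬ p k := by
    rw [Fin.lt_def] at hjk
    rintro (rfl | ⟨-, h⟩) <;> omega
  let B : Matrix (Fin n) (Fin n) K :=
    of fun x y => if x ≠ j ∧ p x ∧ p y then u (w x) y else 0
  have hA : ((1 : Matrix (Fin n) (Fin n) K).updateRow j
      fun y => if p y then u (w k) y else 0).det ≠ 0 := by
    rw [det_updateRow_one, if_pos (Or.inl rfl)]
    exact hu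
  refine (finite_setOf_det_add_smul_eq_zero _ B hA).subset ?_
  rintro ε ⟨hε, hdet⟩
  rw [Set.mem_ofPred_eq]
  have hN : minorMat (fun x => if x = j then w k else w x) p (permMat n K w + ε • u) =
      (diagonal fun x => if x = j then ε else 1) *
      ((1 : Matrix (Fin n) (Fin n) K).updateRow j (fun y => if p y then u (w k) y else 0) +
        ε • B) := by
    ext x y
    rw [minorMat_apply, diagonal_mul, Matrix.add_apply, Matrix.add_apply, updateRow_apply,
      Matrix.smul_apply, Matrix.smul_apply, permMat]
    by_cases hx : x = j
    · subst hx
      have hpx : p x := Or.inl rfl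
      by_cases hy : p y
      · have hky : w k ≠ w y := fun h => hpk (by rwa [w.injective h])
        simp [hpx, hy, hky, B]
      · have : x ≠ y := by rintro rfl; exact hy hpx
        simp [hy, this, B]
    · by_cases hpx : p x
      · by_cases hy : p y
        · simp [hx, hpx, hy, B, one_apply]
        · have : x ≠ y := by rintro rfl; exact hy hpx
          simp [hx, hy, this, B]
      · simp [hx, hpx, B, one_apply]
  rw [hN, det_mul, det_diagonal] at hdet
  refine (mul_eq_zero.mp hdet).resolve_left (Finset.prod_ne_zero_iff.mpr fun x _ => ?_)
  split_ifs
  · exact hε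
  · exact one_ne_zero

theorem isPolyFun_det_minorMat (σ : Fin n → Fin n) (p : Fin n → Prop)
    (b c : Matrix (Fin n) (Fin n) K) :
    IsPolyFun fun v => (minorMat σ p (b * (1 + matOf n K v) * c)).det := by
  have hX : ∀ x y, IsPolyFun fun v : PRoot n → K => (1 + matOf n K v) x y := by
    intro x y
    simp only [Matrix.add_apply, matOf]
    refine (isPolyFun_const _).add ?_
    split_ifs
    · exact isPolyFun_coord _
    · exact isPolyFun_const _
  have hb := IsPolyFun.matrix_mul (M := fun _ => b) (fun x y => isPolyFun_const (b x y)) hX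
  have hc := IsPolyFun.matrix_mul hb (N := fun _ => c) fun x y => isPolyFun_const (c x y)
  exact IsPolyFun.det (IsPolyFun.minorMat hc σ p)

theorem avoids_of_homogeneous [CharZero K] (w : Equiv.Perm (Fin n))
    (h : ∀ f ∈ vanishing (PRoot n) K (YwCell n K w), ∀ d : ℕ,
      MvPolynomial.homogeneousComponent d f ∈ vanishing (PRoot n) K (YwCell n K w)) :
    Avoids w := by
  intro j k hjk hwjk
  by_contra hkj
  rw [not_lt] at hkj
  obtain ⟨b, c, v, hb, hc, hbc, hu⟩ := exists_borel_inv_mul_inv_ne_zero (K := K) w hjk hkj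
  set u := b⁻¹ * c⁻¹ with hu'
  have hfin := finite_setOf_det_minorMat_eq_zero w hjk u hu
  set σ : Fin n → Fin n := fun x => if x = j then w k else w x with hσ
  set p : Fin n → Prop := fun x => x = j ∨ (w k ≤ w x ∧ (x : ℕ) < j + 1) with hp
  obtain ⟨ε, hε⟩ := ((hfin.insert 0).insert (-1)).exists_notMem
  simp only [Set.mem_insert_iff, Set.mem_ofPred_eq, not_or, not_and] at hε
  have hs : 1 + ε ≠ 0 := fun h => hε.1 (by linear_combination h)
  have hdet := hε.2.2 hε.2.1
  obtain ⟨f, hf⟩ := isPolyFun_det_minorMat σ p b⁻¹ c⁻¹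
  have hmem : f ∈ vanishing (PRoot n) K (YwCell n K w) := by
    rintro v' ⟨b', c', hb', hc', hbc'⟩
    rw [hf]
    by_contra hne
    have hle := card_le_rank_corner_of_det_minorMat_ne_zero σ p _ (i := w k) (j := j + 1) (by
      rintro x (rfl | ⟨h1, h2⟩)
      · simp [hσ]
      · refine ⟨?_, h2⟩
        simp only [hσ]
        split_ifs
        · exact le_rfl
        · exact h1) hne
    rw [rank_corner_borel hb.inv hc.inv, hbc', rank_corner_borel hb' hc', rank_corner_permMat] at hle
    refine absurd hle (not_le.mpr (Finset.card_lt_card ?_))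
    rw [Finset.ssubset_iff_of_subset]
    · refine ⟨j, by simp [hp], ?_⟩
      rw [Fin.lt_def] at hwjk
      simp only [Finset.mem_filter, Finset.mem_univ, true_and]
      omega
    · intro x hx
      simp only [Finset.mem_filter, Finset.mem_univ, true_and] at hx ⊢
      exact Or.inr hx
  have hzero := eval_smul_eq_zero_of_homogeneous h hmem (v := v) ⟨b, c, hb, hc, hbc⟩ (1 + ε)⁻¹
  rw [hf] at hzero
  refine det_minorMat_smul_ne_zero σ p _ (inv_ne_zero hs) hdet ?_
  rw [← hzero]
  congr 2
  have hw : permMat n K w = b⁻¹ * (1 + matOf n K v) * c⁻¹ := by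
    rw [hbc, Matrix.mul_assoc b, nonsing_inv_mul_cancel_left _ _ hb.1,
      mul_nonsing_inv_cancel_right _ _ hc.1]
  have hexp : ∀ X : Matrix (Fin n) (Fin n) K, b⁻¹ * (1 + X) * c⁻¹ = u + b⁻¹ * X * c⁻¹ := by
    intro X
    rw [Matrix.mul_add, Matrix.add_mul, Matrix.mul_one]
  rw [hw, hexp, hexp, matOf_smul, Matrix.mul_smul, Matrix.smul_mul, add_right_comm, smul_add]
  congr 1
  rw [← one_smul K u, smul_smul, ← add_smul, smul_smul, mul_one, inv_mul_cancel₀ hs]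

end BruhatCone

/-- the vanishing ideal of `Y_w^∘` in `K[x_γ : γ ∈ Δ⁺]` is
homogeneous (contains every homogeneous component of each of its elements,
i.e. `Y_w` is a cone with center the origin) iff `w = w_D` for some basic
subset `D ⊆ Δ⁺`. -/
theorem stmt4 (n : ℕ) (hn : 2 ≤ n) (K : Type) [Field K] [CharZero K]
    (w : Equiv.Perm (Fin n)) :
    (∀ f ∈ vanishing (PRoot n) K (YwCell n K w), ∀ d : ℕ,
      MvPolynomial.homogeneousComponent d f ∈ vanishing (PRoot n) K (YwCell n K w)) ↔
    ∃ D : Set (ℕ × ℕ), IsBasic n D ∧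
      ∀ j : Fin n, ((w j : ℕ) + 1) = wD n D ((j : ℕ) + 1) := by
  rw [BruhatCone.exists_eq_wD_iff_avoids]
  exact ⟨BruhatCone.avoids_of_homogeneous w, fun h f hf d =>
    BruhatCone.homogeneous_of_avoids w h f hf d⟩
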